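/- Assume ρ(r,θ) > 0 and E(r,θ) := F(r·sin θ) + g·r·sin θ·∫₀^{f(θ)} ρ_θ(r̄(s), θ̄(s)) ds ≥ 0 for all (r,θ) ∈ (0,∞)×(0,π), and define the azimuthal velocity w(r,θ) = −Ω·r·sin θ + E(r,θ)^{1/2}/ρ(r,θ)^{1/2}. Then w and the pressure p satisfy the reduced steady Euler equations of a purely azimuthal flow at every point (r,θ) ∈ (0,∞)×(0,π): (i) −w²/r − 2Ω·w·sin θ − r·Ω²·sin²θ = −(1/ρ)·∂p/∂r − g, and (ii) −(w²/r)·cot θ − 2Ω·w·cos θ − r·Ω²·sin θ·cos θ = −(1/(ρ·r))·∂p/∂θ. -/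

import Mathlib

/-- The characteristic curve `s ↦ θ̄(s)`. -/
noncomputable def thetaBar (s : ℝ) : ℝ :=
  Real.arccos ((1 - Real.exp (2 * s)) / (1 + Real.exp (2 * s)))

/-- The function `f(θ) = ½·ln((1−cos θ)/(1+cos θ))`. -/
noncomputable def fChar (θ : ℝ) : ℝ :=
  (1 / 2) * Real.log ((1 - Real.cos θ) / (1 + Real.cos θ))

/-- The characteristic curve `s ↦ r̄(s)` associated with the point `(r, θ)`. -/
noncomputable def rBar (r θ s : ℝ) : ℝ :=
  (r * Real.sin θ / 2) * (Real.exp s + Real.exp (-s))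

/-- `𝓕(ξ,θ) = ∫₀^{f(θ)} g·ρ_θ(ξ·(e^s+e^{−s})/2, θ̄(s)) ds`. -/
noncomputable def calF (g : ℝ) (ρθ : ℝ → ℝ → ℝ) (ξ θ : ℝ) : ℝ :=
  ∫ s in (0:ℝ)..(fChar θ),
    g * ρθ (ξ * (Real.exp s + Real.exp (-s)) / 2) (thetaBar s)

/-- `E(r,θ) = F(r·sin θ) + g·r·sin θ·∫₀^{f(θ)} ρ_θ(r̄(s), θ̄(s)) ds`. -/
noncomputable def EE (g : ℝ) (ρθ : ℝ → ℝ → ℝ) (F : ℝ → ℝ) (r θ : ℝ) : ℝ :=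
  F (r * Real.sin θ) +
    g * r * Real.sin θ * ∫ s in (0:ℝ)..(fChar θ), ρθ (rBar r θ s) (thetaBar s)

/-- The azimuthal velocity `w(r,θ) = −Ω·r·sin θ + E(r,θ)^{1/2}/ρ(r,θ)^{1/2}`. -/
noncomputable def azVel (Ω g : ℝ) (ρ ρθ : ℝ → ℝ → ℝ) (F : ℝ → ℝ) (r θ : ℝ) : ℝ :=
  -(Ω * r * Real.sin θ) + Real.sqrt (EE g ρθ F r θ) / Real.sqrt (ρ r θ)

/-- The pressure
`p(r,θ) = b − g·∫_a^r ρ(s,θ) ds + ∫_{a sin θ}^{r sin θ} (F(s)/s + 𝓕(s,θ)) ds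
  + ∫_{π/2}^{θ} (F(a sin s)·cot s + 𝓕(a sin s, s)·a·cos s) ds`. -/
noncomputable def pres (g a b : ℝ) (ρ ρθ : ℝ → ℝ → ℝ) (F : ℝ → ℝ) (r θ : ℝ) : ℝ :=
  b - g * (∫ s in a..r, ρ s θ)
    + (∫ s in (a * Real.sin θ)..(r * Real.sin θ), (F s / s + calF g ρθ s θ))
    + ∫ s in (Real.pi / 2)..θ,
        (F (a * Real.sin s) * Real.cot s + calF g ρθ (a * Real.sin s) s * a * Real.cos s)

open Real Set Filter Topology MeasureTheory

lemma aux_primitive {φ : ℝ → ℝ} {k : ℝ → ℝ → ℝ} (hφ : Continuous φ)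
    (hk : Continuous (Function.uncurry k)) {β t : ℝ → ℝ} {β' t' θ₀ : ℝ}
    (hβ : HasDerivAt β β' θ₀) (ht : HasDerivAt t t' θ₀) :
    HasDerivAt (fun θ => ∫ x in (0:ℝ)..(β θ), (φ x + ∫ s in (0:ℝ)..(t θ), k x s))
      ((φ (β θ₀) + ∫ s in (0:ℝ)..(t θ₀), k (β θ₀) s) * β'
        + (∫ x in (0:ℝ)..(β θ₀), k x (t θ₀)) * t') θ₀ := by
  let Q : ℝ → ℝ → ℝ := fun b u => ∫ x in (0:ℝ)..b, (φ x + ∫ s in (0:ℝ)..u, k x s)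
  let f₁ : ℝ → ℝ → ℝ := fun b u => φ b + ∫ s in (0:ℝ)..u, k b s
  let f₂ : ℝ → ℝ → ℝ := fun b u => ∫ x in (0:ℝ)..b, k x u
  have hin : Continuous (fun p : ℝ × ℝ => ∫ s in (0:ℝ)..p.2, k p.1 s) := by
    apply intervalIntegral.continuous_parametric_intervalIntegral_of_continuous (s := fun p : ℝ × ℝ => p.2)
    · exact hk.comp (by fun_prop : Continuous fun p : (ℝ × ℝ) × ℝ => (p.1.1, p.2))
    · fun_prop
  have c1 : Continuous (fun p : ℝ × ℝ => f₁ p.1 p.2) :=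
    (hφ.comp continuous_fst).add hin
  have c2 : Continuous (fun p : ℝ × ℝ => f₂ p.1 p.2) := by
    apply intervalIntegral.continuous_parametric_intervalIntegral_of_continuous (s := fun p : ℝ × ℝ => p.1)
    · exact hk.comp (by fun_prop : Continuous fun p : (ℝ × ℝ) × ℝ => (p.2, p.1.2))
    · fun_prop
  have d1 : ∀ b u, HasDerivAt (fun b => Q b u) (f₁ b u) b := by
    intro b u
    have : Continuous (fun x => f₁ x u) := c1.comp (by fun_prop : Continuous fun x : ℝ => (x, u))
    exact intervalIntegral.integral_hasDerivAt_right (this.intervalIntegrable _ _)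
      (this.stronglyMeasurableAtFilter _ _) this.continuousAt
  have d2 : ∀ b u, HasDerivAt (fun u => Q b u) (f₂ b u) u := by
    intro b u
    have hc : Continuous (fun x => f₂ b x) := c2.comp (by fun_prop : Continuous fun x : ℝ => (b, x))
    have e : (fun u => Q b u) = fun u => (∫ x in (0:ℝ)..b, φ x) + ∫ s in (0:ℝ)..u, f₂ b s := by
      funext u
      simp only [Q, f₂]
      have hq : Continuous (fun x : ℝ => ∫ s in (0:ℝ)..u, k x s) :=
        hin.comp (by fun_prop : Continuous fun x : ℝ => (x, u))
      rw [intervalIntegral.integral_add (hφ.intervalIntegrable _ _)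
        (hq.intervalIntegrable _ _)]
      congr 1
      apply intervalIntegral_intervalIntegral_swap
      exact (hk.continuousOn.integrableOn_compact (isCompact_uIcc.prod isCompact_uIcc)).mono_set
        (prod_mono uIoc_subset_uIcc uIoc_subset_uIcc)
    rw [e]
    exact (intervalIntegral.integral_hasDerivAt_right (hc.intervalIntegrable _ _)
      (hc.stronglyMeasurableAtFilter _ _) hc.continuousAt).const_add _
  have key := hasStrictFDerivAt_uncurry_coprod (𝕜 := ℝ) (u := (β θ₀, t θ₀)) (f := Q)
    (f₁ := fun b u => ContinuousLinearMap.toSpanSingleton ℝ (f₁ b u))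
    (f₂ := fun b u => ContinuousLinearMap.toSpanSingleton ℝ (f₂ b u))
    (Eventually.of_forall fun v => (d1 v.1 v.2).hasFDerivAt)
    (Eventually.of_forall fun v => (d2 v.1 v.2).hasFDerivAt)
    ((ContinuousLinearMap.toSpanSingletonCLE (𝕜 := ℝ) (E := ℝ)).continuous.comp c1).continuousAt
    ((ContinuousLinearMap.toSpanSingletonCLE (𝕜 := ℝ) (E := ℝ)).continuous.comp c2).continuousAt
  have := key.hasFDerivAt.comp_hasDerivAt θ₀ (hβ.prodMk ht)
  refine this.congr_deriv ?_
  simp [f₁, f₂, Function.HasUncurry.uncurry]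
  ring

lemma thetaBar_mem (s : ℝ) : thetaBar s ∈ Ioo 0 π := by
  have h := exp_pos (2 * s)
  refine ⟨arccos_pos.2 ?_, lt_of_le_of_ne (arccos_le_pi _) fun h' => ?_⟩
  · rw [div_lt_one (by positivity)]; linarith
  · have := arccos_eq_pi.1 h'
    rw [div_le_iff₀ (by positivity)] at this; linarith

lemma thetaBar_cont : Continuous thetaBar := by
  unfold thetaBar
  refine continuous_arccos.comp (Continuous.div (by fun_prop) (by fun_prop) fun s => ?_)
  have h := exp_pos (2 * s)
  positivity

lemma cos_lt {θ : ℝ} (hθ : θ ∈ Ioo 0 π) : 0 < 1 - cos θ ∧ 0 < 1 + cos θ := by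
  have h := sin_pos_of_pos_of_lt_pi hθ.1 hθ.2
  have := sin_sq_add_cos_sq θ
  constructor <;> nlinarith [cos_le_one θ, neg_one_le_cos θ]

lemma fChar_deriv {θ : ℝ} (hθ : θ ∈ Ioo 0 π) : HasDerivAt fChar (1 / sin θ) θ := by
  obtain ⟨h1, h2⟩ := cos_lt hθ
  have h := sin_pos_of_pos_of_lt_pi hθ.1 hθ.2
  have := ((((hasDerivAt_cos θ).const_sub 1).div ((hasDerivAt_cos θ).const_add 1) h2.ne').log
    (div_pos h1 h2).ne').const_mul (1/2 : ℝ)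
  refine this.congr_deriv ?_
  simp only [Pi.div_apply]
  have h3 := sin_sq_add_cos_sq θ
  field_simp
  linear_combination 2 * h3

lemma exp_two_fChar {θ : ℝ} (hθ : θ ∈ Ioo 0 π) :
    exp (2 * fChar θ) = (1 - cos θ) / (1 + cos θ) := by
  obtain ⟨h1, h2⟩ := cos_lt hθ
  unfold fChar
  rw [← mul_assoc]; norm_num
  exact exp_log (div_pos h1 h2)

lemma thetaBar_fChar {θ : ℝ} (hθ : θ ∈ Ioo 0 π) : thetaBar (fChar θ) = θ := by
  obtain ⟨h1, h2⟩ := cos_lt hθ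
  unfold thetaBar
  rw [exp_two_fChar hθ]
  have : (1 - (1 - cos θ) / (1 + cos θ)) / (1 + (1 - cos θ) / (1 + cos θ)) = cos θ := by
    have : (1 + (1 - cos θ) / (1 + cos θ)) ≠ 0 := by positivity
    rw [div_eq_iff this]
    field_simp
    ring
  rw [this, arccos_cos hθ.1.le hθ.2.le]

lemma cosh_fChar {θ : ℝ} (hθ : θ ∈ Ioo 0 π) :
    exp (fChar θ) + exp (-fChar θ) = 2 / sin θ := by
  obtain ⟨h1, h2⟩ := cos_lt hθ
  have h := sin_pos_of_pos_of_lt_pi hθ.1 hθ.2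
  have e : exp (fChar θ) = sin θ / (1 + cos θ) := by
    have h3 := sin_sq_add_cos_sq θ
    have : exp (fChar θ) ^ 2 = (sin θ / (1 + cos θ)) ^ 2 := by
      rw [← exp_nat_mul]; push_cast
      rw [exp_two_fChar hθ]
      field_simp
      linear_combination -h3
    exact (pow_left_inj₀ (exp_pos _).le (by positivity) two_ne_zero).1 this
  rw [exp_neg, e]
  have h3 := sin_sq_add_cos_sq θ
  field_simp
  linear_combination h3

/-- Clipped kernel. -/
noncomputable def kk (g : ℝ) (ρθ : ℝ → ℝ → ℝ) (ε ξ s : ℝ) : ℝ :=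
  g * ρθ (max ξ ε * (exp s + exp (-s)) / 2) (thetaBar s)

lemma kk_cont (g : ℝ) {ρθ : ℝ → ℝ → ℝ}
    (hc : ContinuousOn (Function.uncurry ρθ) (Ioi 0 ×ˢ Ioo 0 π)) {ε : ℝ} (hε : 0 < ε) :
    Continuous (Function.uncurry (kk g ρθ ε)) := by
  unfold kk Function.uncurry
  refine continuous_const.mul ?_
  refine hc.comp_continuous
    (f := fun a : ℝ × ℝ => (max a.1 ε * (exp a.2 + exp (-a.2)) / 2, thetaBar a.2)) ?_ ?_
  · have := thetaBar_cont
    fun_prop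
  · intro x
    refine ⟨?_, thetaBar_mem _⟩
    have : 0 < max x.1 ε := lt_max_of_lt_right hε
    have h1 := exp_pos x.2
    have h2 := exp_pos (-x.2)
    simp only [mem_Ioi]
    positivity

lemma calF_eq (g : ℝ) (ρθ : ℝ → ℝ → ℝ) {ε ξ : ℝ} (h : ε ≤ ξ) (θ : ℝ) :
    calF g ρθ ξ θ = ∫ s in (0:ℝ)..(fChar θ), kk g ρθ ε ξ s := by
  unfold calF kk
  rw [max_eq_left h]

lemma calF_cont (g : ℝ) {ρθ : ℝ → ℝ → ℝ}
    (hc : ContinuousOn (Function.uncurry ρθ) (Ioi 0 ×ˢ Ioo 0 π)) {ξ θ : ℝ} (hξ : 0 < ξ)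
    (hθ : θ ∈ Ioo 0 π) :
    ContinuousAt (fun p : ℝ × ℝ => calF g ρθ p.1 p.2) (ξ, θ) := by
  have hk := kk_cont g hc (half_pos hξ)
  have hin : Continuous (fun p : ℝ × ℝ => ∫ s in (0:ℝ)..p.2, kk g ρθ (ξ / 2) p.1 s) := by
    apply intervalIntegral.continuous_parametric_intervalIntegral_of_continuous
      (s := fun p : ℝ × ℝ => p.2)
    · exact hk.comp (by fun_prop : Continuous fun p : (ℝ × ℝ) × ℝ => (p.1.1, p.2))
    · fun_prop
  have h1 : ContinuousAt (fun p : ℝ × ℝ => (p.1, fChar p.2)) (ξ, θ) :=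
    continuousAt_fst.prodMk
      (ContinuousAt.comp (f := Prod.snd) (x := ((ξ, θ) : ℝ × ℝ))
        (fChar_deriv hθ).continuousAt continuousAt_snd)
  have h2 := ContinuousAt.comp (x := ((ξ, θ) : ℝ × ℝ)) (hin.continuousAt) h1
  refine h2.congr ?_
  have : ∀ᶠ p : ℝ × ℝ in 𝓝 (ξ, θ), ξ / 2 < p.1 :=
    continuousAt_fst.eventually (lt_mem_nhds (by simp; linarith))
  filter_upwards [this] with p hp
  exact (calF_eq g ρθ hp.le p.2).symm

lemma middle_deriv (g : ℝ) {ρθ : ℝ → ℝ → ℝ}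
    (hc : ContinuousOn (Function.uncurry ρθ) (Ioi 0 ×ˢ Ioo 0 π)) {F : ℝ → ℝ}
    (hF : ContinuousOn F (Ioi 0)) {a r θ : ℝ} (ha : 0 < a) (hr : 0 < r) (hθ : θ ∈ Ioo 0 π) :
    HasDerivAt (fun θ => ∫ s in (a * sin θ)..(r * sin θ), (F s / s + calF g ρθ s θ))
      ((F (r * sin θ) / (r * sin θ) + calF g ρθ (r * sin θ) θ) * (r * cos θ)
        - (F (a * sin θ) / (a * sin θ) + calF g ρθ (a * sin θ) θ) * (a * cos θ)
        + g * ∫ s in a..r, ρθ s θ) θ := by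
  have hs := sin_pos_of_pos_of_lt_pi hθ.1 hθ.2
  obtain ⟨ε, hε, hεa, hεr⟩ : ∃ ε, 0 < ε ∧ ε < a * sin θ ∧ ε < r * sin θ := by
    have h1 := mul_pos ha hs
    have h2 := mul_pos hr hs
    obtain ⟨ε, h3, h4⟩ := exists_between (lt_min h1 h2)
    exact ⟨ε, h3, lt_min_iff.1 h4⟩
  have hk := kk_cont g hc hε
  have hφ : Continuous (fun s => F (max s ε) / max s ε) := by
    have h0 : ∀ s, 0 < max s ε := fun s => lt_max_of_lt_right hε
    exact (hF.comp_continuous (by fun_prop) h0).div (by fun_prop) fun s => (h0 s).ne'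
  have dr := (hasDerivAt_sin θ).const_mul r
  have da := (hasDerivAt_sin θ).const_mul a
  have D := (aux_primitive hφ hk dr (fChar_deriv hθ)).sub
    (aux_primitive hφ hk da (fChar_deriv hθ))
  have e1 : ∀ᶠ x in 𝓝 θ, ε < a * sin x := da.continuousAt.eventually (lt_mem_nhds hεa)
  have e2 : ∀ᶠ x in 𝓝 θ, ε < r * sin x := dr.continuousAt.eventually (lt_mem_nhds hεr)
  refine (D.congr_of_eventuallyEq ?_).congr_deriv ?_
  · filter_upwards [e1, e2] with x h1 h2
    have hcx : Continuous (fun y => F (max y ε) / max y ε +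
        ∫ s in (0:ℝ)..(fChar x), kk g ρθ ε y s) := by
      refine hφ.add ?_
      apply intervalIntegral.continuous_parametric_intervalIntegral_of_continuous'
      exact hk
    simp only [Pi.sub_apply]
    rw [intervalIntegral.integral_interval_sub_left (hcx.intervalIntegrable _ _)
      (hcx.intervalIntegrable _ _)]
    apply intervalIntegral.integral_congr
    intro y hy
    have hy' : ε ≤ y := (le_min h1.le h2.le).trans hy.1
    simp only
    rw [calF_eq g ρθ hy', max_eq_left hy']
  · rw [← calF_eq g ρθ hεa.le, ← calF_eq g ρθ hεr.le, max_eq_left hεa.le, max_eq_left hεr.le]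
    have hcx : Continuous (fun y => kk g ρθ ε y (fChar θ)) :=
      hk.comp (by fun_prop : Continuous fun y : ℝ => (y, fChar θ))
    have h1 := intervalIntegral.integral_interval_sub_left (μ := volume)
      (hcx.intervalIntegrable 0 (r * sin θ)) (hcx.intervalIntegrable 0 (a * sin θ))
    have h2 : ∫ y in (a * sin θ)..(r * sin θ), kk g ρθ ε y (fChar θ)
        = ∫ y in (a * sin θ)..(r * sin θ), (fun z => g * ρθ z θ) (y / sin θ) := by
      apply intervalIntegral.integral_congr
      intro y hy
      have hy' : ε ≤ y := (le_min hεa.le hεr.le).trans hy.1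
      simp only [kk]
      rw [max_eq_left hy', thetaBar_fChar hθ, cosh_fChar hθ]
      congr 2
      field_simp
    rw [intervalIntegral.integral_comp_div (fun z => g * ρθ z θ) hs.ne', mul_div_cancel_right₀ _ hs.ne',
      mul_div_cancel_right₀ _ hs.ne', intervalIntegral.integral_const_mul, smul_eq_mul] at h2
    rw [h2] at h1
    have h3 : g * ∫ s in a..r, ρθ s θ = (sin θ * (g * ∫ s in a..r, ρθ s θ)) * (1 / sin θ) := by
      field_simp
    rw [h3, ← h1]
    ring

lemma rho_deriv {ρ ρθ : ℝ → ℝ → ℝ}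
    (hρ : ContinuousOn (Function.uncurry ρ) (Ioi 0 ×ˢ Ioo 0 π))
    (hρθ : ∀ r ∈ Ioi (0:ℝ), ∀ t ∈ Ioo 0 π, HasDerivAt (fun u => ρ r u) (ρθ r t) t)
    (hc : ContinuousOn (Function.uncurry ρθ) (Ioi 0 ×ˢ Ioo 0 π))
    {a r θ : ℝ} (ha : 0 < a) (hr : 0 < r) (hθ : θ ∈ Ioo 0 π) :
    HasDerivAt (fun θ => ∫ s in a..r, ρ s θ) (∫ s in a..r, ρθ s θ) θ := by
  obtain ⟨δ, hδ, hb⟩ := Metric.nhds_basis_closedBall.mem_iff.1 (Ioo_mem_nhds hθ.1 hθ.2)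
  have hpos : ∀ s ∈ uIcc a r, 0 < s := fun s hs => (lt_min ha hr).trans_le hs.1
  have hsl : ∀ (f : ℝ → ℝ → ℝ), ContinuousOn (Function.uncurry f) (Ioi 0 ×ˢ Ioo 0 π) →
      ∀ x ∈ Ioo 0 π, ContinuousOn (fun s => f s x) (uIcc a r) := by
    intro f hf x hx
    exact hf.comp (f := fun s : ℝ => (s, x)) (by fun_prop) fun s hs => ⟨hpos s hs, hx⟩
  obtain ⟨C, hC⟩ := (isCompact_uIcc.prod (isCompact_closedBall θ δ)).exists_bound_of_continuousOn
    (hc.mono (prod_mono (fun s hs => hpos s hs : uIcc a r ⊆ Ioi 0) hb))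
  refine (intervalIntegral.hasDerivAt_integral_of_dominated_loc_of_deriv_le (μ := volume)
    (F := fun x s => ρ s x) (F' := fun x s => ρθ s x) (bound := fun _ => C)
    (Metric.closedBall_mem_nhds θ hδ) ?_ ?_ ?_ ?_ ?_ ?_).2
  · filter_upwards [Ioo_mem_nhds hθ.1 hθ.2] with x hx
    exact (hsl ρ hρ x hx).intervalIntegrable.def'.aestronglyMeasurable
  · exact (hsl ρ hρ θ hθ).intervalIntegrable
  · exact (hsl ρθ hc θ hθ).intervalIntegrable.def'.aestronglyMeasurable
  · exact Eventually.of_forall fun s hs x hx => hC (s, x) ⟨uIoc_subset_uIcc hs, hx⟩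
  · exact intervalIntegrable_const
  · exact Eventually.of_forall fun s hs x hx =>
      hρθ s (hpos s (uIoc_subset_uIcc hs)) x (hb hx)

lemma ftc {f : ℝ → ℝ} {S : Set ℝ} (hS : IsOpen S) (hf : ContinuousOn f S) {c x : ℝ}
    (h : uIcc c x ⊆ S) : HasDerivAt (fun u => ∫ s in c..u, f s) (f x) x := by
  have hx : S ∈ 𝓝 x := hS.mem_nhds (h right_mem_uIcc)
  exact intervalIntegral.integral_hasDerivAt_right (hf.mono h).intervalIntegrable
    (hf.stronglyMeasurableAtFilter hS x (h right_mem_uIcc)) (hf.continuousAt hx)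

/-- The azimuthal velocity `w` and the pressure `p` satisfy the reduced steady
Euler equations of a purely azimuthal flow at every point of `(0,∞)×(0,π)`. -/
theorem azimuthal_flow_solves_Euler (Ω g a b : ℝ)
    (hΩ : 0 < Ω) (hg : 0 < g) (ha : 0 < a)
    (ρ ρθ : ℝ → ℝ → ℝ)
    (hρ : ContDiffOn ℝ 2 (fun q : ℝ × ℝ => ρ q.1 q.2)
      (Set.Ioi 0 ×ˢ Set.Ioo 0 Real.pi))
    (hρθ : ∀ r ∈ Set.Ioi (0:ℝ), ∀ t ∈ Set.Ioo 0 Real.pi,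
      HasDerivAt (fun u => ρ r u) (ρθ r t) t)
    (hρpos : ∀ r ∈ Set.Ioi (0:ℝ), ∀ θ ∈ Set.Ioo 0 Real.pi, 0 < ρ r θ)
    (F : ℝ → ℝ) (hF : ContDiffOn ℝ 1 F (Set.Ioi 0))
    (hE : ∀ r ∈ Set.Ioi (0:ℝ), ∀ θ ∈ Set.Ioo 0 Real.pi, 0 ≤ EE g ρθ F r θ) :
    ∀ r ∈ Set.Ioi (0:ℝ), ∀ θ ∈ Set.Ioo 0 Real.pi,
      (-(azVel Ω g ρ ρθ F r θ)^2 / r - 2 * Ω * azVel Ω g ρ ρθ F r θ * Real.sin θ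
          - r * Ω^2 * (Real.sin θ)^2
        = -(1 / ρ r θ) * deriv (fun r' => pres g a b ρ ρθ F r' θ) r - g) ∧
      (-((azVel Ω g ρ ρθ F r θ)^2 / r) * Real.cot θ
          - 2 * Ω * azVel Ω g ρ ρθ F r θ * Real.cos θ
          - r * Ω^2 * Real.sin θ * Real.cos θ
        = -(1 / (ρ r θ * r)) * deriv (fun θ' => pres g a b ρ ρθ F r θ') θ) := by
  intro r hr θ hθ
  have hr' : 0 < r := hr
  have hs := sin_pos_of_pos_of_lt_pi hθ.1 hθ.2
  have hp := hρpos r hr θ hθ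
  have hU : IsOpen (Ioi (0:ℝ) ×ˢ Ioo 0 π) := isOpen_Ioi.prod isOpen_Ioo
  have hρc : ContinuousOn (Function.uncurry ρ) (Ioi 0 ×ˢ Ioo 0 π) := hρ.continuousOn
  have hc : ContinuousOn (Function.uncurry ρθ) (Ioi 0 ×ˢ Ioo 0 π) := by
    have h1 := (hρ.continuousOn_fderiv_of_isOpen hU (by norm_num)).clm_apply
      (continuousOn_const (c := ((0:ℝ), (1:ℝ))))
    refine h1.congr ?_
    rintro ⟨x, t⟩ hx
    have h2 := ((hρ.differentiableOn (by norm_num)).differentiableAt (hU.mem_nhds hx)).hasFDerivAt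
    have h3 := h2.comp_hasDerivAt t ((hasDerivAt_const t x).prodMk (hasDerivAt_id t))
    exact (hρθ x hx.1 t hx.2).unique h3
  have hFc := hF.continuousOn
  have hEE : EE g ρθ F r θ = F (r * sin θ) + r * sin θ * calF g ρθ (r * sin θ) θ := by
    unfold EE calF rBar
    rw [intervalIntegral.integral_const_mul]
    have : ∀ s, r * sin θ / 2 * (exp s + exp (-s)) = r * sin θ * (exp s + exp (-s)) / 2 :=
      fun s => by ring
    simp only [this]
    ring
  have hE0 := hE r hr θ hθ
  have hw : (azVel Ω g ρ ρθ F r θ + Ω * r * sin θ) ^ 2 = EE g ρθ F r θ / ρ r θ := by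
    unfold azVel
    rw [neg_add_cancel_comm, div_pow, sq_sqrt hE0, sq_sqrt hp.le]
  have hposu : ∀ x y : ℝ, 0 < x → 0 < y → uIcc x y ⊆ Ioi 0 :=
    fun x y hx hy s hs => (lt_min hx hy).trans_le hs.1
  -- radial derivative
  have Dr : HasDerivAt (fun r' => pres g a b ρ ρθ F r' θ)
      (-(g * ρ r θ) + EE g ρθ F r θ / r) r := by
    have h1 : HasDerivAt (fun r' => ∫ s in a..r', ρ s θ) (ρ r θ) r := by
      refine ftc isOpen_Ioi ?_ (hposu a r ha hr)
      exact hρc.comp (f := fun s : ℝ => (s, θ)) (by fun_prop) fun s hs => ⟨hs, hθ⟩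
    have h2 : HasDerivAt (fun u => ∫ s in (a * sin θ)..u, (F s / s + calF g ρθ s θ))
        (F (r * sin θ) / (r * sin θ) + calF g ρθ (r * sin θ) θ) (r * sin θ) := by
      refine ftc (f := fun s => F s / s + calF g ρθ s θ) isOpen_Ioi ?_
        (hposu _ _ (mul_pos ha hs) (mul_pos hr hs))
      refine (hFc.div continuousOn_id fun s hs => (ne_of_gt hs)).add fun s hs => ?_
      exact (ContinuousAt.comp (f := fun s : ℝ => (s, θ)) (x := s) (calF_cont g hc hs hθ)
        (by fun_prop)).continuousWithinAt
    have h3 := h2.comp r ((hasDerivAt_id r).mul_const (sin θ))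
    refine ((((h1.const_mul g).const_sub b).add h3).add_const _).congr_deriv ?_
    rw [hEE]
    field_simp
  have Dt : HasDerivAt (fun θ' => pres g a b ρ ρθ F r θ') (EE g ρθ F r θ * cot θ) θ := by
    have h1 := rho_deriv hρc hρθ hc ha hr hθ
    have h2 := middle_deriv g hc hFc ha hr hθ
    have h3 : HasDerivAt (fun u => ∫ s in (π / 2)..u,
        (F (a * sin s) * cot s + calF g ρθ (a * sin s) s * a * cos s))
        (F (a * sin θ) * cot θ + calF g ρθ (a * sin θ) θ * a * cos θ) θ := by
      refine ftc (f := fun s => F (a * sin s) * cot s + calF g ρθ (a * sin s) s * a * cos s)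
        (isOpen_Ioo (a := 0) (b := π)) ?_ ?_
      · have hsp : ∀ s ∈ Ioo 0 π, 0 < sin s := fun s hs => sin_pos_of_pos_of_lt_pi hs.1 hs.2
        refine ContinuousOn.add (ContinuousOn.mul ?_ ?_) (ContinuousOn.mul (ContinuousOn.mul ?_
          continuousOn_const) continuous_cos.continuousOn)
        · exact hFc.comp (by fun_prop) fun s hs => mul_pos ha (hsp s hs)
        · exact (continuous_cos.continuousOn.div continuous_sin.continuousOn
            fun s hs => (hsp s hs).ne').congr fun s _ => cot_eq_cos_div_sin s
        · intro s hs
          exact (ContinuousAt.comp (f := fun s : ℝ => (a * sin s, s)) (x := s)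
            (calF_cont g hc (mul_pos ha (hsp s hs)) hs) (by fun_prop)).continuousWithinAt
      · intro s hs
        have hpi := pi_pos
        exact ⟨(lt_min (half_pos hpi) hθ.1).trans_le hs.1,
          hs.2.trans_lt (max_lt (half_lt_self hpi) hθ.2)⟩
    refine ((((h1.const_mul g).const_sub b).add h2).add h3).congr_deriv ?_
    rw [hEE, cot_eq_cos_div_sin]
    field_simp
    ring
  rw [Dr.deriv, Dt.deriv, cot_eq_cos_div_sin]
  generalize azVel Ω g ρ ρθ F r θ = w at *
  generalize EE g ρθ F r θ = E at *
  have hE' : E = ρ r θ * (w + Ω * r * sin θ) ^ 2 := by rw [hw]; field_simp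
  rw [hE']
  constructor
  · field_simp
    ring
  · field_simp
    ring
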